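/- The generalised power construction is functorial on V-functors: for a V-functor f: A → B between V-categories over a commutative quantale V, the direct-image map P f sending a V-subset φ of A to the V-subset of B given by b ↦ ⋁_{a : f a = b} φ a is a V-functor between the generalised power V-categories, i.e. P A(φ,ψ) ≤ P B(P f φ, P f ψ) for all V-subsets φ, ψ of A. -/

import Mathlib

universe u v w

/-- A category enriched in a commutative quantale `V`:
objects together with `V`-valued homs satisfying the identity and composition axioms. -/
structure VCategory (V : Type u) [CompleteLattice V] [CommMonoid V] where
  Obj : Type v
  hom : Obj → Obj → V
  one_le_hom : ∀ a, (1 : V) ≤ hom a a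
  comp_le : ∀ a b c, hom b c * hom a b ≤ hom a c

/-- A `V`-functor is an object assignment which is (hom-)expanding. -/
def IsVFunctor {V : Type u} [CompleteLattice V] [CommMonoid V]
    (A : VCategory.{u, v} V) (B : VCategory.{u, w} V) (f : A.Obj → B.Obj) : Prop :=
  ∀ a a', A.hom a a' ≤ B.hom (f a) (f a')

/-- A module `R : A ⇸ B`. -/
def IsModule {V : Type u} [CompleteLattice V] [CommMonoid V]
    (A : VCategory.{u, v} V) (B : VCategory.{u, w} V) (R : B.Obj → A.Obj → V) : Prop :=
  ∀ (a a' : A.Obj) (b b' : B.Obj), B.hom b' b * R b a * A.hom a a' ≤ R b' a'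

/-- The internal hom of the quantale: `[x,y] = ⋁ {z | x ⊗ z ≤ y}`. -/
def ihom {V : Type u} [CompleteLattice V] [CommMonoid V] (x y : V) : V :=
  sSup {z | x * z ≤ y}

/-- A presheaf on `A`. -/
def IsPresheaf {V : Type u} [CompleteLattice V] [CommMonoid V]
    (A : VCategory.{u, v} V) (F : A.Obj → V) : Prop :=
  ∀ a a', F a * A.hom a' a ≤ F a'

/-- The Egli-Milner `V`-valued hom on `V`-subsets of a `V`-category `A`. -/
def PHom {V : Type u} [CompleteLattice V] [CommMonoid V]
    (A : VCategory.{u, v} V) (φ ψ : A.Obj → V) : V :=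
  (⨅ a, ihom (φ a) (⨆ a', ψ a' * A.hom a a')) *
    (⨅ a', ihom (ψ a') (⨆ a, φ a * A.hom a a'))

/-- Direct image of a `V`-subset along a map. -/
def Pmap {V : Type u} [CompleteLattice V] [CommMonoid V] {α : Type v} {β : Type w}
    (f : α → β) (φ : α → V) : β → V :=
  fun b => ⨆ a, ⨆ _ : f a = b, φ a

/-!
Direct image along `f` is left adjoint to precomposition with `f`, and tensoring is left adjoint to
the internal hom. Hence suprema weighted by a direct image over `B` are suprema over `A`, and
the hom between two direct images is the hom between the original `V`-subsets formed with
`B(f a, f a')` in place of `A(a, a')`. A `V`-functor satisfies `A(a, a') ≤ B(f a, f a')`, and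
the hom between `V`-subsets is monotone in the underlying relation.
-/

theorem isQuantale_of_mul_sSup {V : Type*} [CompleteLattice V] [CommSemigroup V]
    (h : ∀ (x : V) (s : Set V), x * sSup s = ⨆ y ∈ s, x * y) : IsQuantale V where
  mul_sSup_distrib := h
  sSup_mul_distrib s y := by simp only [mul_comm _ y, h]

section VSubsets

variable {V : Type u} [CompleteLattice V] [CommMonoid V] {α : Type v} {β : Type w}

theorem ihom_mono_right (x : V) : Monotone (ihom x) :=
  fun _ _ hy => sSup_le_sSup fun _ hz => le_trans hz hy

theorem le_ihom_iff_mul_le [IsQuantale V] {x y z : V} : z ≤ ihom x y ↔ x * z ≤ y :=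
  Quantale.rightMulResiduation_le_iff_mul_le

theorem le_ihom_comm [IsQuantale V] {x y z : V} : z ≤ ihom x y ↔ x ≤ ihom z y := by
  rw [le_ihom_iff_mul_le, le_ihom_iff_mul_le, mul_comm]

theorem pmap_le_iff_le_comp {f : α → β} {φ : α → V} {χ : β → V} :
    Pmap f φ ≤ χ ↔ φ ≤ χ ∘ f := by
  simp only [Pi.le_def, Pmap, iSup_le_iff, Function.comp_apply]
  exact ⟨fun h a => h (f a) a rfl, by rintro h _ a rfl; exact h a⟩

theorem iSup_pmap_mul [IsQuantale V] (f : α → β) (φ : α → V) (t : β → V) :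
    ⨆ b, Pmap f φ b * t b = ⨆ a, φ a * t (f a) := by
  refine eq_of_forall_ge_iff fun c => ?_
  calc
    ⨆ b, Pmap f φ b * t b ≤ c ↔ Pmap f φ ≤ fun b => ihom (t b) c := by
      simp only [iSup_le_iff, Pi.le_def, le_ihom_iff_mul_le, mul_comm]
    _ ↔ φ ≤ fun a => ihom (t (f a)) c := pmap_le_iff_le_comp
    _ ↔ ⨆ a, φ a * t (f a) ≤ c := by
      simp only [iSup_le_iff, Pi.le_def, le_ihom_iff_mul_le, mul_comm]

theorem iInf_ihom_pmap [IsQuantale V] (f : α → β) (φ : α → V) (t : β → V) :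
    ⨅ b, ihom (Pmap f φ b) (t b) = ⨅ a, ihom (φ a) (t (f a)) := by
  refine eq_of_forall_le_iff fun z => ?_
  calc
    z ≤ ⨅ b, ihom (Pmap f φ b) (t b) ↔ Pmap f φ ≤ fun b => ihom z (t b) := by
      simp only [le_iInf_iff, Pi.le_def, le_ihom_comm (z := z)]
    _ ↔ φ ≤ fun a => ihom z (t (f a)) := pmap_le_iff_le_comp
    _ ↔ z ≤ ⨅ a, ihom (φ a) (t (f a)) := by
      simp only [le_iInf_iff, Pi.le_def, le_ihom_comm (z := z)]

/-- The lower (Hoare) hom between `V`-subsets induced by a `V`-valued relation `R`: the degree to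
which every element of `φ` is `R`-related to some element of `ψ`. The hom `PHom` is assembled from
two instances of it. -/
def lowerHom (R : α → α → V) (φ ψ : α → V) : V :=
  ⨅ a, ihom (φ a) (⨆ a', ψ a' * R a a')

theorem lowerHom_mono_rel [MulLeftMono V] {R S : α → α → V} (h : R ≤ S) (φ ψ : α → V) :
    lowerHom R φ ψ ≤ lowerHom S φ ψ :=
  iInf_mono fun a => ihom_mono_right (φ a) <| iSup_mono fun a' => mul_le_mul_right (h a a') (ψ a')

theorem lowerHom_pmap [IsQuantale V] (S : β → β → V) (f : α → β) (φ ψ : α → V) :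
    lowerHom S (Pmap f φ) (Pmap f ψ) = lowerHom (fun a a' => S (f a) (f a')) φ ψ := by
  simp only [lowerHom, iSup_pmap_mul, iInf_ihom_pmap f φ fun b => ⨆ a', ψ a' * S b (f a')]

theorem lowerHom_le_lowerHom_pmap [IsQuantale V] {R : α → α → V} {S : β → β → V} {f : α → β}
    (hf : ∀ a a', R a a' ≤ S (f a) (f a')) (φ ψ : α → V) :
    lowerHom R φ ψ ≤ lowerHom S (Pmap f φ) (Pmap f ψ) :=
  (lowerHom_mono_rel hf φ ψ).trans_eq (lowerHom_pmap S f φ ψ).symm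

/-- The Egli-Milner hom induced by an arbitrary `V`-valued relation `R`, the two-sided version of
`lowerHom`. For the hom of a `V`-category it is `PHom`, definitionally. -/
def egliMilnerHom (R : α → α → V) (φ ψ : α → V) : V :=
  lowerHom R φ ψ * lowerHom (flip R) ψ φ

theorem power_functorial_general [IsQuantale V] {R : α → α → V} {S : β → β → V} {f : α → β}
    (hf : ∀ a a', R a a' ≤ S (f a) (f a')) (φ ψ : α → V) :
    egliMilnerHom R φ ψ ≤ egliMilnerHom S (Pmap f φ) (Pmap f ψ) :=
  mul_le_mul' (lowerHom_le_lowerHom_pmap hf φ ψ)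
    (lowerHom_le_lowerHom_pmap (fun a a' => hf a' a) ψ φ)

end VSubsets

/-- The generalised power construction is functorial on `V`-functors. -/
theorem power_functorial {V : Type u} [CompleteLattice V] [CommMonoid V]
    (hV : ∀ (x : V) (s : Set V), x * sSup s = ⨆ y ∈ s, x * y)
    (A B : VCategory.{u, v} V)
    (f : A.Obj → B.Obj) (hf : IsVFunctor A B f) :
    ∀ φ ψ : A.Obj → V, PHom A φ ψ ≤ PHom B (Pmap f φ) (Pmap f ψ) := by
  have := isQuantale_of_mul_sSup hV
  exact power_functorial_general hf
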